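/- arXiv:1707.01130 — 3 statements merged into one kernel-verified Lean document; each statement's English description precedes it below -/
import Mathlib

section
/- Let Y be an ℝ^p-valued random vector with the multivariate normal distribution N_p(0, Σ) for a symmetric positive definite matrix Σ, and let U be a real random variable independent of Y with the Gamma distribution with shape ν/2 and rate ν/2 (i.e., U = V/ν where V is chi-squared with ν degrees of freedom), where ν > 0. Then the random vector X = μ + Y / √U has the multivariate t distribution, i.e., the law of X has density f(·; μ, Σ, ν) with respect to Lebesgue measure on ℝ^p. -/
open Matrix MeasureTheory ProbabilityTheory

/-- The multivariate t density on ℝ^p with location `μ`, scatter matrix `S` and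
degrees of freedom `ν`. -/
noncomputable def mvtPdf (p : ℕ) (μ : Fin p → ℝ) (S : Matrix (Fin p) (Fin p) ℝ)
    (ν : ℝ) (x : Fin p → ℝ) : ℝ :=
  Real.Gamma ((ν + p) / 2) * S.det ^ (-(1 : ℝ) / 2) /
      ((Real.pi * ν) ^ ((p : ℝ) / 2) * Real.Gamma (ν / 2)) *
    (1 + (x - μ) ⬝ᵥ (S⁻¹ *ᵥ (x - μ)) / ν) ^ (-((ν + p) / 2))

/-- The multivariate normal density `N_p(μ, C)` for a positive definite `C`. -/
noncomputable def mvnPdf (p : ℕ) (μ : Fin p → ℝ) (C : Matrix (Fin p) (Fin p) ℝ)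
    (x : Fin p → ℝ) : ℝ :=
  (2 * Real.pi) ^ (-(p : ℝ) / 2) * C.det ^ (-(1 : ℝ) / 2) *
    Real.exp (-(1 / 2) * ((x - μ) ⬝ᵥ (C⁻¹ *ᵥ (x - μ))))

/-- Affine change of variables `y = c • (x - μ)` in a Lebesgue integral on `ℝ^p`. -/
lemma lintegral_comp_smul_sub {p : ℕ} (μ : Fin p → ℝ) {c : ℝ} (hc : 0 < c)
    {h : (Fin p → ℝ) → ENNReal} (hh : Measurable h) :
    ∫⁻ x, ENNReal.ofReal (c ^ p) * h (c • (x - μ)) = ∫⁻ y, h y := by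
  have hmap := Measure.map_addHaar_smul (volume : Measure (Fin p → ℝ)) hc.ne'
  have hcomp : ∫⁻ x : Fin p → ℝ, h (c • x) = ENNReal.ofReal ((c ^ p)⁻¹) * ∫⁻ y, h y := by
    rw [← lintegral_map hh (measurable_const_smul c), hmap, lintegral_smul_measure,
      Module.finrank_fin_fun, abs_of_pos (by positivity), smul_eq_mul]
  rw [lintegral_const_mul _ (by fun_prop), lintegral_sub_right_eq_self (fun x => h (c • x)) μ,
    hcomp, ← mul_assoc, ← ENNReal.ofReal_mul (by positivity),
    mul_inv_cancel₀ (by positivity), ENNReal.ofReal_one, one_mul]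

@[fun_prop]
lemma measurable_gammaPDF (a r : ℝ) : Measurable (gammaPDF a r) :=
  (measurable_gammaPDFReal a r).ennreal_ofReal

lemma continuous_dotProduct_mulVec {p : ℕ} (A : Matrix (Fin p) (Fin p) ℝ) :
    Continuous fun x : Fin p → ℝ => x ⬝ᵥ (A *ᵥ x) := by
  fun_prop

@[fun_prop]
lemma measurable_mvnPdf {p : ℕ} (μ : Fin p → ℝ) (C : Matrix (Fin p) (Fin p) ℝ) :
    Measurable (mvnPdf p μ C) := by
  have h := ((continuous_dotProduct_mulVec C⁻¹).comp (continuous_id.sub continuous_const) :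
    Continuous fun x : Fin p → ℝ => (x - μ) ⬝ᵥ (C⁻¹ *ᵥ (x - μ))).measurable
  unfold mvnPdf
  fun_prop

@[fun_prop]
lemma measurable_mvtPdf {p : ℕ} (μ : Fin p → ℝ) (S : Matrix (Fin p) (Fin p) ℝ) (ν : ℝ) :
    Measurable (mvtPdf p μ S ν) := by
  have h := ((continuous_dotProduct_mulVec S⁻¹).comp (continuous_id.sub continuous_const) :
    Continuous fun x : Fin p → ℝ => (x - μ) ⬝ᵥ (S⁻¹ *ᵥ (x - μ))).measurable
  unfold mvtPdf
  fun_prop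

/-- The joint density of `(X, U)` factors as the marginal t density of `X` times the conditional
density of `U` given `X`, which is again a Gamma density. -/
lemma gammaPDFReal_mul_mvnPdf_sqrt_smul {p : ℕ} (μ : Fin p → ℝ) {S : Matrix (Fin p) (Fin p) ℝ}
    (hS : S.PosDef) {ν : ℝ} (hν : 0 < ν) (x : Fin p → ℝ) {u : ℝ} (hu : 0 < u) :
    gammaPDFReal (ν / 2) (ν / 2) u * (√u ^ p * mvnPdf p 0 S (√u • (x - μ))) =
      mvtPdf p μ S ν x * gammaPDFReal ((ν + p) / 2)
        ((ν + (x - μ) ⬝ᵥ (S⁻¹ *ᵥ (x - μ))) / 2) u := by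
  have hq : 0 ≤ (x - μ) ⬝ᵥ (S⁻¹ *ᵥ (x - μ)) := by
    simpa using hS.inv.posSemidef.dotProduct_mulVec_nonneg (x - μ)
  have hscale : (√u • (x - μ)) ⬝ᵥ (S⁻¹ *ᵥ (√u • (x - μ))) =
      u * ((x - μ) ⬝ᵥ (S⁻¹ *ᵥ (x - μ))) := by
    rw [mulVec_smul, smul_dotProduct, dotProduct_smul, smul_eq_mul, smul_eq_mul, ← mul_assoc,
      Real.mul_self_sqrt hu.le]
  simp only [gammaPDFReal, hu.le, if_true, mvnPdf, mvtPdf, sub_zero, hscale]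
  generalize (x - μ) ⬝ᵥ (S⁻¹ *ᵥ (x - μ)) = q at hq ⊢
  have hb : 0 < Real.Gamma ((ν + p) / 2) := Real.Gamma_pos_of_pos (by positivity)
  have ha : 0 < Real.Gamma (ν / 2) := Real.Gamma_pos_of_pos (by positivity)
  have hrate : ((ν + q) / 2) ^ ((ν + p) / 2) =
      (ν / 2) ^ (ν / 2) * (ν / 2) ^ ((p : ℝ) / 2) * (1 + q / ν) ^ ((ν + p) / 2) := by
    rw [show (ν + q) / 2 = ν / 2 * (1 + q / ν) by field_simp,
      Real.mul_rpow (by positivity) (by positivity),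
      show (ν + p) / 2 = ν / 2 + (p : ℝ) / 2 by ring, Real.rpow_add (by positivity)]
  have hpiν : (Real.pi * ν) ^ ((p : ℝ) / 2) =
      (2 * Real.pi) ^ ((p : ℝ) / 2) * (ν / 2) ^ ((p : ℝ) / 2) := by
    rw [← Real.mul_rpow (by positivity) (by positivity)]
    congr 1
    ring
  have hsqrt : √u ^ p = u ^ ((p : ℝ) / 2) := by
    rw [Real.sqrt_eq_rpow, ← Real.rpow_natCast, ← Real.rpow_mul hu.le]
    congr 1
    ring
  have hpow : u ^ ((ν + p) / 2 - 1) = u ^ (ν / 2 - 1) * u ^ ((p : ℝ) / 2) := by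
    rw [← Real.rpow_add hu]
    congr 1
    ring
  have hexp : Real.exp (-((ν + q) / 2 * u)) =
      Real.exp (-(ν / 2 * u)) * Real.exp (-(1 / 2) * (u * q)) := by
    rw [← Real.exp_add]
    congr 1
    ring
  rw [hrate, hpiν, hsqrt, hpow, hexp, neg_div, Real.rpow_neg (by positivity),
    Real.rpow_neg (by positivity : 0 ≤ 1 + q / ν)]
  have h₁ : 0 < (1 + q / ν) ^ ((ν + p) / 2) := Real.rpow_pos_of_pos (by positivity) _
  have h₂ : 0 < (2 * Real.pi) ^ ((p : ℝ) / 2) := by positivity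
  have h₃ : 0 < (ν / 2) ^ ((p : ℝ) / 2) := by positivity
  generalize (1 + q / ν) ^ ((ν + p) / 2) = A at h₁ ⊢
  generalize (2 * Real.pi) ^ ((p : ℝ) / 2) = B at h₂ ⊢
  generalize (ν / 2) ^ ((p : ℝ) / 2) = C at h₃ ⊢
  generalize Real.Gamma ((ν + p) / 2) = G at hb ⊢
  generalize Real.Gamma (ν / 2) = H at ha ⊢
  field_simp

lemma mvtPdf_nonneg {p : ℕ} (μ : Fin p → ℝ) {S : Matrix (Fin p) (Fin p) ℝ} (hS : S.PosDef)
    {ν : ℝ} (hν : 0 < ν) (x : Fin p → ℝ) : 0 ≤ mvtPdf p μ S ν x := by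
  have hdet := hS.det_pos
  have hq : 0 ≤ (x - μ) ⬝ᵥ (S⁻¹ *ᵥ (x - μ)) := by
    simpa using hS.inv.posSemidef.dotProduct_mulVec_nonneg (x - μ)
  unfold mvtPdf
  positivity

/-- Integrating the mixing variable out of the joint density yields the t density. -/
lemma lintegral_gammaPDF_mul_mvnPdf {p : ℕ} (μ : Fin p → ℝ) {S : Matrix (Fin p) (Fin p) ℝ}
    (hS : S.PosDef) {ν : ℝ} (hν : 0 < ν) (x : Fin p → ℝ) :
    ∫⁻ u, gammaPDF (ν / 2) (ν / 2) u *
        (ENNReal.ofReal (√u ^ p) * ENNReal.ofReal (mvnPdf p 0 S (√u • (x - μ)))) =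
      ENNReal.ofReal (mvtPdf p μ S ν x) := by
  have hq : 0 ≤ (x - μ) ⬝ᵥ (S⁻¹ *ᵥ (x - μ)) := by
    simpa using hS.inv.posSemidef.dotProduct_mulVec_nonneg (x - μ)
  calc
    _ = ∫⁻ u, ENNReal.ofReal (mvtPdf p μ S ν x) * gammaPDF ((ν + p) / 2)
          ((ν + (x - μ) ⬝ᵥ (S⁻¹ *ᵥ (x - μ))) / 2) u := by
      refine lintegral_congr_ae ?_
      filter_upwards [Measure.ae_ne volume (0 : ℝ)] with u hu
      rcases hu.lt_or_gt with hu | hu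
      · simp [gammaPDF_of_neg hu]
      · rw [gammaPDF, gammaPDF, ← ENNReal.ofReal_mul (by positivity),
          ← ENNReal.ofReal_mul (gammaPDFReal_nonneg (by positivity) (by positivity) u),
          ← ENNReal.ofReal_mul (mvtPdf_nonneg μ hS hν x),
          gammaPDFReal_mul_mvnPdf_sqrt_smul μ hS hν x hu]
    _ = _ := by
      rw [lintegral_const_mul _ (measurable_gammaPDF _ _),
        lintegral_gammaPDF_eq_one (by positivity) (by positivity), mul_one]

/-- If `Y ~ N_p(0, Σ)` and, independently, `U ~ Gamma(ν/2, ν/2)`, then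
`X = μ + Y / √U` has the multivariate t distribution `t_p(μ, Σ, ν)`. -/
theorem scale_mixture_is_mvt (p : ℕ) (hp : 0 < p) (μ : Fin p → ℝ)
    (S : Matrix (Fin p) (Fin p) ℝ) (hSsymm : S.IsSymm) (hSpos : S.PosDef)
    (ν : ℝ) (hν : 0 < ν)
    {Ω : Type*} [MeasurableSpace Ω] (P : Measure Ω) [IsProbabilityMeasure P]
    (Y : Ω → (Fin p → ℝ)) (U : Ω → ℝ) (hYm : Measurable Y) (hUm : Measurable U)
    (hY : P.map Y = volume.withDensity fun y => ENNReal.ofReal (mvnPdf p 0 S y))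
    (hU : P.map U = gammaMeasure (ν / 2) (ν / 2))
    (hindep : IndepFun Y U P) :
    P.map (fun ω => μ + fun i => Y ω i / Real.sqrt (U ω)) =
      volume.withDensity fun x => ENNReal.ofReal (mvtPdf p μ S ν x) := by
  have hmap : Measurable fun z : (Fin p → ℝ) × ℝ => μ + fun i => z.1 i / √z.2 := by
    fun_prop
  have : IsProbabilityMeasure (P.map Y) := Measure.isProbabilityMeasure_map hYm.aemeasurable
  have : IsProbabilityMeasure (P.map U) := Measure.isProbabilityMeasure_map hUm.aemeasurable
  refine Measure.ext_of_lintegral _ fun f hf => ?_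
  have hjoint : ∫⁻ x, f x ∂(P.map fun ω => μ + fun i => Y ω i / √(U ω)) =
      ∫⁻ u, ∫⁻ y, f (μ + fun i => y i / √u) ∂(P.map Y) ∂(P.map U) := by
    rw [lintegral_map hf (by fun_prop),
      ← lintegral_prod_symm' (fun z : (Fin p → ℝ) × ℝ => f (μ + fun i => z.1 i / √z.2))
        (hf.comp hmap),
      ← (indepFun_iff_map_prod_eq_prod_map_map hYm.aemeasurable hUm.aemeasurable).1 hindep,
      lintegral_map (by fun_prop) (hYm.prodMk hUm)]
  have hinner : Measurable fun u : ℝ => ∫⁻ y, f (μ + fun i => y i / √u) ∂(P.map Y) :=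
    (hf.comp hmap).lintegral_prod_left'
  have hjointDensity : Measurable fun z : ℝ × (Fin p → ℝ) => gammaPDF (ν / 2) (ν / 2) z.1 *
      (ENNReal.ofReal (√z.1 ^ p) * ENNReal.ofReal (mvnPdf p 0 S (√z.1 • (z.2 - μ)))) := by
    fun_prop
  calc
    _ = ∫⁻ u, gammaPDF (ν / 2) (ν / 2) u * ∫⁻ y, f (μ + fun i => y i / √u) ∂(P.map Y) := by
      rw [hjoint, hU, gammaMeasure, lintegral_withDensity_eq_lintegral_mul _ (measurable_gammaPDF _ _) hinner]
      rfl
    _ = ∫⁻ u, ∫⁻ x, gammaPDF (ν / 2) (ν / 2) u * (ENNReal.ofReal (√u ^ p) *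
          ENNReal.ofReal (mvnPdf p 0 S (√u • (x - μ)))) * f x := by
      refine lintegral_congr_ae ?_
      filter_upwards [Measure.ae_ne volume (0 : ℝ)] with u hu
      rcases hu.lt_or_gt with hu | hu
      · simp [gammaPDF_of_neg hu]
      have hs : 0 < √u := Real.sqrt_pos.2 hu
      have hfu : Measurable fun y : Fin p → ℝ => f (μ + fun i => y i / √u) := by fun_prop
      have hdens : Measurable fun y => ENNReal.ofReal (mvnPdf p 0 S y) := by fun_prop
      have hback (x : Fin p → ℝ) : (μ + fun i => (√u • (x - μ)) i / √u) = x := by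
        ext i
        simp only [Pi.add_apply, Pi.smul_apply, Pi.sub_apply, smul_eq_mul]
        field_simp
        ring
      rw [hY, lintegral_withDensity_eq_lintegral_mul _ hdens hfu,
        ← lintegral_comp_smul_sub μ hs (hdens.mul hfu), ← lintegral_const_mul _ (by fun_prop)]
      refine lintegral_congr fun x => ?_
      simp only [Pi.mul_apply, hback, mul_assoc]
    _ = ∫⁻ x, ENNReal.ofReal (mvtPdf p μ S ν x) * f x := by
      rw [lintegral_lintegral_swap (hjointDensity.mul (hf.comp measurable_snd)).aemeasurable]
      refine lintegral_congr fun x => ?_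
      rw [lintegral_mul_const _ (by fun_prop),
        lintegral_gammaPDF_mul_mvnPdf μ hSpos hν]
    _ = _ := by
      rw [lintegral_withDensity_eq_lintegral_mul _ (measurable_mvtPdf μ S ν).ennreal_ofReal hf]
      rfl
end

section
/- Let Σ be a symmetric positive definite p×p matrix, μ ∈ ℝ^p, and ν > 0. The maximum likelihood score function for the location parameter, Ψ_μ(x) = ((ν+p)/(ν + s(x))) Σ^{-1}(x − μ) with s(x) = (x−μ)ᵀ Σ^{-1}(x−μ), tends to the zero vector as ‖x‖ → ∞: lim_{‖x‖→∞} Ψ_μ(x) = 0. -/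
open Matrix Filter Topology

/-- The quadratic form of a real positive definite matrix is coercive. -/
theorem Matrix.PosDef.exists_pos_mul_norm_sq_le {n : Type*} [Fintype n]
    {A : Matrix n n ℝ} (hA : A.PosDef) :
    ∃ c : ℝ, 0 < c ∧ ∀ y : n → ℝ, c * ‖y‖ ^ 2 ≤ y ⬝ᵥ (A *ᵥ y) := by
  have hcont : Continuous fun y : n → ℝ => y ⬝ᵥ (A *ᵥ y) := by fun_prop
  obtain ⟨c, hc, hle⟩ := (isCompact_sphere (0 : n → ℝ) 1).exists_forall_le'
    hcont.continuousOn (a := 0) fun y hy => by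
      have hy0 : y ≠ 0 := by
        rintro rfl
        simp at hy
      simpa using hA.dotProduct_mulVec_pos hy0
  refine ⟨c, hc, fun y => ?_⟩
  rcases eq_or_ne y 0 with rfl | hy
  · simp
  have hn : 0 < ‖y‖ := norm_pos_iff.mpr hy
  have h := hle (‖y‖⁻¹ • y) (by simp [norm_smul, hn.ne'])
  simp only [mulVec_smul, dotProduct_smul, smul_dotProduct, smul_eq_mul] at h
  calc c * ‖y‖ ^ 2 ≤ ‖y‖⁻¹ * (‖y‖⁻¹ * (y ⬝ᵥ (A *ᵥ y))) * ‖y‖ ^ 2 := by gcongr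
    _ = y ⬝ᵥ (A *ᵥ y) := by field_simp

/-- The ML score function for the location parameter of the multivariate t
distribution, `Ψ_μ(x) = ((ν+p)/(ν+s(x))) Σ⁻¹ (x - μ)`, tends to the zero vector
as `‖x‖ → ∞`. -/
theorem ml_location_score_redescending (p : ℕ) (hp : 0 < p) (μ : Fin p → ℝ)
    (S : Matrix (Fin p) (Fin p) ℝ) (hSsymm : S.IsSymm) (hSpos : S.PosDef)
    (ν : ℝ) (hν : 0 < ν) :
    Tendsto
      (fun x : Fin p → ℝ =>
        ((ν + p) / (ν + (x - μ) ⬝ᵥ (S⁻¹ *ᵥ (x - μ)))) • (S⁻¹ *ᵥ (x - μ)))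
      (comap (fun x : Fin p → ℝ => ‖x‖) atTop) (𝓝 0) := by
  obtain ⟨c, hc, hcoer⟩ := hSpos.inv.exists_pos_mul_norm_sq_le
  set C : ℝ := ‖(S⁻¹).mulVecLin.toContinuousLinearMap‖
  have hbound (y : Fin p → ℝ) : ‖S⁻¹ *ᵥ y‖ ≤ C * ‖y‖ :=
    (S⁻¹).mulVecLin.toContinuousLinearMap.le_opNorm y
  have hnorm : Tendsto (fun x : Fin p → ℝ => ‖x - μ‖)
      (comap (fun x : Fin p → ℝ => ‖x‖) atTop) atTop :=
    tendsto_atTop_mono (fun x => norm_sub_norm_le x μ)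
      (tendsto_atTop_add_const_right _ (-‖μ‖) tendsto_comap)
  have hlim : Tendsto (fun x : Fin p → ℝ => (ν + p) * C / c * ‖x - μ‖⁻¹)
      (comap (fun x : Fin p → ℝ => ‖x‖) atTop) (𝓝 0) := by
    simpa using (tendsto_inv_atTop_zero.comp hnorm).const_mul ((ν + p) * C / c)
  refine squeeze_zero_norm' ?_ hlim
  filter_upwards [hnorm.eventually_gt_atTop 0] with x hx
  have hden : c * ‖x - μ‖ ^ 2 ≤ ν + (x - μ) ⬝ᵥ (S⁻¹ *ᵥ (x - μ)) := by
    linarith [hcoer (x - μ)]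
  have hpos : 0 < c * ‖x - μ‖ ^ 2 := by positivity
  rw [norm_smul, Real.norm_of_nonneg (div_nonneg (by positivity) (hpos.le.trans hden))]
  calc (ν + p) / (ν + (x - μ) ⬝ᵥ (S⁻¹ *ᵥ (x - μ))) * ‖S⁻¹ *ᵥ (x - μ)‖
      ≤ (ν + p) / (c * ‖x - μ‖ ^ 2) * (C * ‖x - μ‖) := by
        gcongr
        exact hbound _
    _ = (ν + p) * C / c * ‖x - μ‖⁻¹ := by field_simp
end

section
/- Let μ ∈ ℝ^p, Σ symmetric positive definite, ν > 0, and 0 < q < 1. The MLq score function for the degrees of freedom, Ψ_ν^q(x) = [(1/2) ψ((ν+p)/2) − (1/2) ψ(ν/2) + (1/2) log ν + 1/2 − (1/2) log(ν + s(x)) − (1/2)(ν+p)/(ν+s(x))] · f(x; μ, Σ, ν)^{1−q}, where s(x) = (x−μ)ᵀ Σ^{-1}(x−μ), is a bounded function of x on ℝ^p, and moreover Ψ_ν^q(x) → 0 as ‖x‖ → ∞. -/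
open Matrix Filter Topology

/-- The digamma function `ψ(α) = d/dα log Γ(α)`. -/
noncomputable def digamma (x : ℝ) : ℝ :=
  deriv (fun t => Real.log (Real.Gamma t)) x

/-- The MLq score function for the degrees of freedom of the multivariate t
distribution, i.e. the ML score weighted by `f(x)^{1-q}`. -/
noncomputable def mlqDofScore (p : ℕ) (μ : Fin p → ℝ) (S : Matrix (Fin p) (Fin p) ℝ)
    (ν q : ℝ) (x : Fin p → ℝ) : ℝ :=
  (1 / 2 * digamma ((ν + p) / 2) - 1 / 2 * digamma (ν / 2) + 1 / 2 * Real.log ν +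
      1 / 2 - 1 / 2 * Real.log (ν + (x - μ) ⬝ᵥ (S⁻¹ *ᵥ (x - μ))) -
      1 / 2 * (ν + p) / (ν + (x - μ) ⬝ᵥ (S⁻¹ *ᵥ (x - μ)))) *
    mvtPdf p μ S ν x ^ (1 - q)

/-- A continuous, positive definite, `2`-homogeneous function on a finite-dimensional space
is coercive. -/
theorem tendsto_cocompact_atTop_of_sq_homogeneous {E : Type*} [NormedAddCommGroup E]
    [NormedSpace ℝ E] [FiniteDimensional ℝ E] [Nontrivial E] {Q : E → ℝ} (hQ : Continuous Q)
    (hsmul : ∀ (c : ℝ) x, Q (c • x) = c ^ 2 * Q x) (hpos : ∀ x, x ≠ 0 → 0 < Q x) :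
    Tendsto Q (cocompact E) atTop := by
  have : ProperSpace E := FiniteDimensional.proper_real E
  obtain ⟨y, hy, hmin⟩ := (isCompact_sphere (0 : E) 1).exists_isMinOn
    (NormedSpace.sphere_nonempty.2 zero_le_one) hQ.continuousOn
  have hy0 : 0 < Q y := hpos y (by rintro rfl; simp at hy)
  have hbound : ∀ x, Q y * ‖x‖ ^ 2 ≤ Q x := by
    intro x
    rcases eq_or_ne x 0 with rfl | hx
    · have h : Q 0 = 0 := by simpa using hsmul 0 0
      simp [h]
    · have hn : ‖x‖ ≠ 0 := norm_ne_zero_iff.2 hx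
      have hle : Q y ≤ Q (‖x‖⁻¹ • x) := hmin (by simp [norm_smul, hn])
      calc Q y * ‖x‖ ^ 2 ≤ Q (‖x‖⁻¹ • x) * ‖x‖ ^ 2 := by gcongr
        _ = Q x := by rw [hsmul]; field_simp
  exact tendsto_atTop_mono hbound <|
    ((tendsto_pow_atTop two_ne_zero).comp tendsto_norm_cocompact_atTop).const_mul_atTop hy0

/-- A power of negative exponent absorbs logarithmic growth. -/
theorem tendsto_const_sub_log_sub_div_mul_rpow_neg (A B C : ℝ) {b : ℝ} (hb : 0 < b) :
    Tendsto (fun u : ℝ => (A - B * Real.log u - C / u) * u ^ (-b)) atTop (𝓝 0) := by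
  have hpow : Tendsto (fun u : ℝ => u ^ (-b)) atTop (𝓝 0) := tendsto_rpow_neg_atTop hb
  have hlog : Tendsto (fun u : ℝ => Real.log u * u ^ (-b)) atTop (𝓝 0) := by
    refine (isLittleO_log_rpow_atTop hb).tendsto_div_nhds_zero.congr' ?_
    filter_upwards [eventually_ge_atTop 0] with u hu
    rw [Real.rpow_neg hu, div_eq_mul_inv]
  have hinv : Tendsto (fun u : ℝ => C / u) atTop (𝓝 0) := tendsto_const_nhds.div_atTop tendsto_id
  have h := ((hpow.const_mul A).sub (hlog.const_mul B)).sub (hinv.mul hpow)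
  simp only [mul_zero, sub_zero] at h
  exact h.congr fun u => by ring

/-- A continuous real function vanishing at infinity is bounded. -/
theorem exists_abs_le_of_tendsto_cocompact_zero {X : Type*} [TopologicalSpace X] {f : X → ℝ}
    (hf : Continuous f) (h0 : Tendsto f (cocompact X) (𝓝 0)) : ∃ M : ℝ, ∀ x, |f x| ≤ M := by
  let F : ZeroAtInftyContinuousMap X ℝ := ⟨⟨f, hf⟩, h0⟩
  obtain ⟨M, hM⟩ := (ZeroAtInftyContinuousMap.isBounded_range F).exists_norm_le
  exact ⟨M, fun x => hM _ ⟨x, rfl⟩⟩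

/-- The MLq score function for the degrees of freedom is bounded on ℝ^p, and it
tends to `0` as `‖x‖ → ∞`. -/
theorem mlq_dof_score_bounded (p : ℕ) (hp : 0 < p) (μ : Fin p → ℝ)
    (S : Matrix (Fin p) (Fin p) ℝ) (hSsymm : S.IsSymm) (hSpos : S.PosDef)
    (ν : ℝ) (hν : 0 < ν) (q : ℝ) (hq0 : 0 < q) (hq1 : q < 1) :
    (∃ M : ℝ, ∀ x : Fin p → ℝ, |mlqDofScore p μ S ν q x| ≤ M) ∧
      Tendsto (fun x : Fin p → ℝ => mlqDofScore p μ S ν q x)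
        (comap (fun x : Fin p → ℝ => ‖x‖) atTop) (𝓝 0) := by
  have : Nonempty (Fin p) := ⟨⟨0, hp⟩⟩
  set s : (Fin p → ℝ) → ℝ := fun x => (x - μ) ⬝ᵥ (S⁻¹ *ᵥ (x - μ))
  have hs_nonneg : ∀ x, 0 ≤ s x := fun x => by
    simpa only [star_trivial] using hSpos.inv.posSemidef.dotProduct_mulVec_nonneg (x - μ)
  have hs_cont : Continuous s := by fun_prop
  have hs_tendsto : Tendsto s (cocompact (Fin p → ℝ)) atTop := by
    have hQ : Tendsto (fun y : Fin p → ℝ => y ⬝ᵥ (S⁻¹ *ᵥ y)) (cocompact _) atTop := by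
      refine tendsto_cocompact_atTop_of_sq_homogeneous (by fun_prop) (fun c y => ?_)
        fun y hy => by simpa using hSpos.inv.dotProduct_mulVec_pos hy
      simp only [mulVec_smul, smul_dotProduct, dotProduct_smul, smul_eq_mul]
      ring
    exact hQ.comp (Homeomorph.subRight μ).isClosedEmbedding.tendsto_cocompact
  have hu_pos : ∀ x, 0 < ν + s x := fun x => add_pos_of_pos_of_nonneg hν (hs_nonneg x)
  set K : ℝ := Real.Gamma ((ν + p) / 2) * S.det ^ (-(1 : ℝ) / 2) /
    ((Real.pi * ν) ^ ((p : ℝ) / 2) * Real.Gamma (ν / 2))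
  have hK_nonneg : 0 ≤ K := by
    have := hSpos.det_pos
    have := Real.Gamma_pos_of_pos (half_pos hν)
    have := Real.Gamma_pos_of_pos (s := (ν + p) / 2) (by positivity)
    positivity
  set A : ℝ := 1 / 2 * digamma ((ν + p) / 2) - 1 / 2 * digamma (ν / 2) + 1 / 2 * Real.log ν + 1 / 2
  set b : ℝ := (ν + p) / 2 * (1 - q) with hb
  have hb_pos : 0 < b := mul_pos (by positivity) (sub_pos.2 hq1)
  set g : ℝ → ℝ := fun u => (A - 1 / 2 * Real.log u - 1 / 2 * (ν + p) / u) * u ^ (-b)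
  set D : ℝ := K ^ (1 - q) * (ν ^ (-b))⁻¹ with hD
  have hscore : ∀ x, mlqDofScore p μ S ν q x = D * g (ν + s x) := by
    intro x
    have hpdf : mvtPdf p μ S ν x = K * ((ν + s x) / ν) ^ (-((ν + p) / 2)) := by
      rw [add_div, div_self hν.ne']
      rfl
    have hweight : mvtPdf p μ S ν x ^ (1 - q) = D * (ν + s x) ^ (-b) := by
      have hr : 0 ≤ (ν + s x) / ν := (div_pos (hu_pos x) hν).le
      rw [hpdf, Real.mul_rpow hK_nonneg (Real.rpow_nonneg hr _), ← Real.rpow_mul hr, neg_mul, ← hb,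
        Real.div_rpow (hu_pos x).le hν.le, hD]
      ring
    change (A - 1 / 2 * Real.log (ν + s x) - 1 / 2 * (ν + p) / (ν + s x)) *
      mvtPdf p μ S ν x ^ (1 - q) = _
    rw [hweight]
    ring
  have hcont : Continuous (mlqDofScore p μ S ν q) := by
    rw [funext hscore]
    have hu : Continuous fun x => ν + s x := continuous_const.add hs_cont
    have hne : ∀ x, ν + s x ≠ 0 := fun x => (hu_pos x).ne'
    exact continuous_const.mul <|
      ((continuous_const.sub (continuous_const.mul (hu.log hne))).sub
        (continuous_const.div hu hne)).mul (hu.rpow_const fun x => Or.inl (hne x))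
  have hzero : Tendsto (mlqDofScore p μ S ν q) (cocompact _) (𝓝 0) := by
    rw [funext hscore]
    have h := ((tendsto_const_sub_log_sub_div_mul_rpow_neg A (1 / 2) (1 / 2 * (ν + p)) hb_pos).comp
      (tendsto_atTop_add_const_left _ ν hs_tendsto)).const_mul D
    rwa [mul_zero] at h
  refine ⟨exists_abs_le_of_tendsto_cocompact_zero hcont hzero, ?_⟩
  rwa [comap_norm_atTop, Metric.cobounded_eq_cocompact]
end
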